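/- arXiv:2301.03542 — 2 statements merged into one kernel-verified Lean document; each statement's English description precedes it below -/
import Mathlib

section
/- Let 𝙿, 𝚀 ≪_loc 𝚪 be sequential laws, let s ∈ ℕ, and let h be an ℱ_s-measurable random variable with values in [0,1] satisfying 𝚪(h < 1 and Z_s^𝚀 = 0) = 0, and let 𝚁 be the (s,h)-fork-convex combination of 𝙿 with 𝚀. If a nonnegative adapted process {M_t} is a nonnegative supermartingale for both 𝙿 and 𝚀, then {M_t} is a nonnegative supermartingale for 𝚁; if {M_t} is a nonnegative martingale for both 𝙿 and 𝚀, then it is a nonnegative martingale for 𝚁. -/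
open MeasureTheory ProbabilityTheory Filter Finset Matrix
open scoped Classical

noncomputable section

namespace SeqTest

/-- `ℝ^d`. -/
abbrev RV (d : ℕ) := Fin d → ℝ

/-- The sequence space `Ω = (ℝ^d)^ℕ`. -/
abbrev Seq (d : ℕ) := ℕ → RV d

variable (d : ℕ)


/-- The first `t` coordinates of a sequence. -/
def prefixMap (t : ℕ) : Seq d → (Fin t → RV d) := fun ω s => ω s

/-- The law of the first `t` coordinates under a sequential law `μ`. -/
def prefixLaw (μ : Measure (Seq d)) (t : ℕ) : Measure (Fin t → RV d) :=
  μ.map (prefixMap d t)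

/-- The natural filtration of the coordinate process: `ℱ t = σ(X_0, …, X_{t-1})`. -/
def F : Filtration ℕ (inferInstance : MeasurableSpace (Seq d)) where
  seq t := ⨆ s ∈ Finset.range t, MeasurableSpace.comap (fun ω : Seq d => ω s) inferInstance
  mono' := by
    intro i j hij
    exact biSup_mono fun s hs => Finset.mem_range.mpr
      (lt_of_lt_of_le (Finset.mem_range.mp hs) hij)
  le' := by
    intro t
    refine iSup₂_le fun s _ => ?_
    exact measurable_iff_comap_le.mp (measurable_pi_apply s)

/-- Local absolute continuity of sequential laws: every prefix law of `μ` is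
absolutely continuous w.r.t. the corresponding prefix law of `Γ`. -/
def LocAC (μ Γ : Measure (Seq d)) : Prop := ∀ t, prefixLaw d μ t ≪ prefixLaw d Γ t

/-- The density (likelihood-ratio) process `Z_t^μ = d(μ|_t)/d(Γ|_t)` evaluated along the path. -/
def Z (μ Γ : Measure (Seq d)) (t : ℕ) (ω : Seq d) : ℝ :=
  ((prefixLaw d μ t).rnDeriv (prefixLaw d Γ t) (prefixMap d t ω)).toReal

/-- The standard Gaussian measure on `ℝ^d`. -/
def stdGaussian : Measure (RV d) := Measure.pi fun _ => gaussianReal 0 1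

/-- `Γ` is the law of an i.i.d. sequence of standard Gaussians: characterized through its
finite-dimensional rectangle probabilities. -/
def IsGamma (Γ : Measure (Seq d)) : Prop :=
  IsProbabilityMeasure Γ ∧
    ∀ (t : ℕ) (A : Fin t → Set (RV d)), (∀ s, MeasurableSet (A s)) →
      prefixLaw d Γ t (Set.univ.pi A) = ∏ s, stdGaussian d (A s)

/-- `M` is a nonnegative supermartingale for the sequential law `μ`
(w.r.t. the natural filtration). -/
def IsNSM (μ : Measure (Seq d)) (M : ℕ → Seq d → ℝ) : Prop :=
  (∀ t ω, 0 ≤ M t ω) ∧ Supermartingale M (F d) μ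

/-- `M` is a nonnegative martingale for the sequential law `μ`. -/
def IsNM (μ : Measure (Seq d)) (M : ℕ → Seq d → ℝ) : Prop :=
  (∀ t ω, 0 ≤ M t ω) ∧ Martingale M (F d) μ


/-- `R` is the `(s,h)`-fork-convex combination of `P` with `Q` (relative to the
reference law `Γ`), described through its density process. -/
def IsFCC (Γ P Q : Measure (Seq d)) (s : ℕ) (h : Seq d → ℝ) (R : Measure (Seq d)) : Prop :=
  IsProbabilityMeasure P ∧ IsProbabilityMeasure Q ∧ LocAC d P Γ ∧ LocAC d Q Γ ∧
  Measurable[F d s] h ∧ (∀ ω, h ω ∈ Set.Icc (0 : ℝ) 1) ∧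
  Γ {ω | h ω < 1 ∧ Z d Q Γ s ω = 0} = 0 ∧
  IsProbabilityMeasure R ∧ LocAC d R Γ ∧
  ∀ t : ℕ, (fun ω => Z d R Γ t ω) =ᵐ[Γ]
    (fun ω => if t ≤ s then Z d P Γ t ω
      else h ω * Z d P Γ t ω + (1 - h ω) * Z d Q Γ t ω * (Z d P Γ s ω / Z d Q Γ s ω))

/-- A set of sequential laws is fork-convex if it is closed under fork-convex combinations. -/
def IsForkConvex (Γ : Measure (Seq d)) (S : Set (Measure (Seq d))) : Prop :=
  ∀ P ∈ S, ∀ Q ∈ S, ∀ (s : ℕ) (h : Seq d → ℝ) (R : Measure (Seq d)),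
    IsFCC d Γ P Q s h R → R ∈ S

/-- The fork-convex hull: the smallest fork-convex set containing `𝔓`. -/
def fconv (Γ : Measure (Seq d)) (𝔓 : Set (Measure (Seq d))) : Set (Measure (Seq d)) :=
  ⋂₀ {S | 𝔓 ⊆ S ∧ IsForkConvex d Γ S}

/-- Convergence of sequential laws: the density processes converge in `L¹(Γ)` at every fixed time. -/
def TendstoLocL1 (Γ : Measure (Seq d)) (Pn : ℕ → Measure (Seq d)) (P : Measure (Seq d)) : Prop :=
  ∀ t, Tendsto (fun n => ∫ ω, |Z d (Pn n) Γ t ω - Z d P Γ t ω| ∂Γ) atTop (nhds 0)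

/-- The closed fork-convex hull: the closure of the fork-convex hull under local `L¹(Γ)`
convergence of density processes. -/
def clfconv (Γ : Measure (Seq d)) (𝔓 : Set (Measure (Seq d))) : Set (Measure (Seq d)) :=
  {P | IsProbabilityMeasure P ∧ LocAC d P Γ ∧
    ∃ Pn : ℕ → Measure (Seq d), (∀ n, Pn n ∈ fconv d Γ 𝔓) ∧ TendstoLocL1 d Γ Pn P}

/-- `μ` is the law of an i.i.d. sequence with marginal `P`. -/
def IsIIDLaw (μ : Measure (Seq d)) (P : Measure (RV d)) : Prop :=
  IsProbabilityMeasure μ ∧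
    ∀ (t : ℕ) (A : Fin t → Set (RV d)), (∀ s, MeasurableSet (A s)) →
      prefixLaw d μ t (Set.univ.pi A) = ∏ s, P (A s)

/-- `μ` is the law of an independent sequence with marginals `Ps 0, Ps 1, …`. -/
def IsProductLaw (μ : Measure (Seq d)) (Ps : ℕ → Measure (RV d)) : Prop :=
  IsProbabilityMeasure μ ∧
    ∀ (t : ℕ) (A : Fin t → Set (RV d)), (∀ s, MeasurableSet (A s)) →
      prefixLaw d μ t (Set.univ.pi A) = ∏ s : Fin t, Ps s (A s)

/-- The set of i.i.d. sequential laws with marginals in `PP`. -/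
def iidLaws (PP : Set (Measure (RV d))) : Set (Measure (Seq d)) :=
  {μ | ∃ P ∈ PP, IsIIDLaw d μ P}

/-- The set of independent-product sequential laws with all marginals in `PP`. -/
def productLaws (PP : Set (Measure (RV d))) : Set (Measure (Seq d)) :=
  {μ | ∃ Ps : ℕ → Measure (RV d), (∀ t, Ps t ∈ PP) ∧ IsProductLaw d μ Ps}




/-- The density of the `d`-dimensional Gaussian with mean `m` and covariance matrix `S`. -/
def gaussDensityFn (m : RV d) (S : Matrix (Fin d) (Fin d) ℝ) (x : RV d) : ℝ :=
  (2 * Real.pi) ^ (-(d : ℝ) / 2) * S.det ^ (-(1 : ℝ) / 2) *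
    Real.exp (-(1 / 2) * ((x - m) ⬝ᵥ (S⁻¹ *ᵥ (x - m))))

/-- A finite mixture of nondegenerate Gaussian densities. -/
def IsGaussianMixture (g : RV d → ℝ) : Prop :=
  ∃ (k : ℕ) (α : Fin k → ℝ) (ms : Fin k → RV d) (Ss : Fin k → Matrix (Fin d) (Fin d) ℝ),
    (∀ i, 0 ≤ α i) ∧ (∑ i, α i = 1) ∧ (∀ i, (Ss i).PosDef) ∧
    g = fun x => ∑ i, α i * gaussDensityFn d (ms i) (Ss i) x

/-- A log-concave nonnegative function on `ℝ^d`. -/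
def IsLogConcaveFn (p : RV d → ℝ) : Prop :=
  (∀ x, 0 ≤ p x) ∧
    ∀ (x y : RV d) (l : ℝ), 0 ≤ l → l ≤ 1 →
      p x ^ l * p y ^ (1 - l) ≤ p (l • x + (1 - l) • y)

/-- A log-concave probability density on `ℝ^d`. -/
def IsLogConcaveDensity (p : RV d → ℝ) : Prop :=
  Measurable p ∧ IsLogConcaveFn d p ∧ ∫ x, p x = 1

/-- The set `𝓛` of laws on `ℝ^d` with a log-concave Lebesgue density. -/
def logConcaveLaws : Set (Measure (RV d)) :=
  {P | IsProbabilityMeasure P ∧ ∃ p : RV d → ℝ, Measurable p ∧ IsLogConcaveFn d p ∧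
    P = volume.withDensity fun x => ENNReal.ofReal (p x)}

/-- The set `𝒢` of nondegenerate Gaussian laws on `ℝ^d`. -/
def gaussianLaws : Set (Measure (RV d)) :=
  {P | ∃ (m : RV d) (S : Matrix (Fin d) (Fin d) ℝ), S.PosDef ∧
    P = volume.withDensity fun x => ENNReal.ofReal (gaussDensityFn d m S x)}

/-- An estimator sequence: a measurable family of (strictly positive) predictable
probability density estimates. -/
def IsEstimatorSeq (E : (t : ℕ) → (Fin t → RV d) → RV d → ℝ) : Prop :=
  (∀ t, Measurable fun q : (Fin t → RV d) × RV d => E t q.1 q.2) ∧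
  (∀ t h x, 0 < E t h x) ∧ (∀ t h, ∫ x, E t h x = 1)

/-- The universal likelihood ratio (ULR) process. Time `t` corresponds to having observed
the `t` samples `ω 0, …, ω (t-1)`. -/
def ULR (E : (t : ℕ) → (Fin t → RV d) → RV d → ℝ) (t : ℕ) (ω : Seq d) : ℝ :=
  if t ≤ d then 1 else
    (∏ j ∈ Finset.Ico d t, E j (fun i : Fin j => ω i) (ω j)) /
      ⨆ p : {p : RV d → ℝ // IsLogConcaveDensity d p}, ∏ j ∈ Finset.Ico d t, p.1 (ω j)

/-- The prediction (cumulative log-loss) regret of the estimator sequence `E` relative to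
the density of `P`. -/
def regret (P : Measure (RV d)) (E : (t : ℕ) → (Fin t → RV d) → RV d → ℝ)
    (t : ℕ) (ω : Seq d) : ℝ :=
  ∑ j ∈ Finset.range t,
    (Real.log ((P.rnDeriv volume (ω j)).toReal) - Real.log (E j (fun i : Fin j => ω i) (ω j)))

/-- The Hellinger distance between two laws on `ℝ^d` (via their Lebesgue densities). -/
def hellinger (P Q : Measure (RV d)) : ℝ :=
  Real.sqrt ((1 / 2) *
    ∫ x, (Real.sqrt ((P.rnDeriv volume x).toReal) - Real.sqrt ((Q.rnDeriv volume x).toReal)) ^ 2)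

/-- The Hellinger distance from `P` to the class of log-concave laws. -/
def dHLC (P : Measure (RV d)) : ℝ :=
  sInf {r | ∃ L ∈ logConcaveLaws d, r = hellinger d P L}

/-- The Kullback–Leibler divergence. -/
def klDivR {α : Type*} [MeasurableSpace α] (P Q : Measure α) : EReal :=
  if P ≪ Q ∧ Integrable (fun x => Real.log ((P.rnDeriv Q x).toReal)) P
  then ((∫ x, Real.log ((P.rnDeriv Q x).toReal) ∂P : ℝ) : EReal) else ⊤

/-- Membership in `𝒟₁`. -/
def MemD1 (P : Measure (RV d)) : Prop :=
  IsProbabilityMeasure P ∧ P ≪ volume ∧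
  Integrable (fun x => max 0 (Real.log ((P.rnDeriv volume x).toReal))) P ∧
  Integrable (fun x => Real.sqrt (∑ i, (x i) ^ 2)) P

/-- The log-likelihood gap `σ_t(P)` between the true density and the log-concave maximum
likelihood. -/
def sigmaT (P : Measure (RV d)) (t : ℕ) (ω : Seq d) : ℝ :=
  (∑ j ∈ Finset.range t, Real.log ((P.rnDeriv volume (ω j)).toReal)) -
    ⨆ p : {p : RV d → ℝ // IsLogConcaveDensity d p},
      ∑ j ∈ Finset.range t, Real.log (p.1 (ω j))

/-- The mean vector of `P`. -/
def meanVec (P : Measure (RV d)) : RV d := fun i => ∫ x, x i ∂P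

/-- `Δ_P = min_{‖v‖=1} E_P |⟨v, X − E_P X⟩|`. -/
def DeltaP (P : Measure (RV d)) : ℝ :=
  sInf {r | ∃ v : RV d, (∑ i, (v i) ^ 2) = 1 ∧
    r = ∫ x, |∑ i, v i * (x i - meanVec d P i)| ∂P}

/-- The class `𝒟_{Box,Lip,B}`: laws with a `1`-Lipschitz density supported on `[-1,1]^d`
taking values in `[1/B, B]` there. -/
def DBoxLip (B : ℝ) : Set (Measure (RV d)) :=
  {P | IsProbabilityMeasure P ∧ ∃ p : RV d → ℝ, Measurable p ∧
    P = volume.withDensity (fun x => ENNReal.ofReal (p x)) ∧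
    (∀ x, ¬ (∀ i, |x i| ≤ 1) → p x = 0) ∧
    (∀ x, (∀ i, |x i| ≤ 1) → 1 / B ≤ p x ∧ p x ≤ B) ∧
    (∀ x y, (∀ i, |x i| ≤ 1) → (∀ i, |y i| ≤ 1) →
      |p x - p y| ≤ Real.sqrt (∑ i, (x i - y i) ^ 2))}

open scoped ENNReal

variable {d}

lemma measurable_prefixMap (t : ℕ) : Measurable (prefixMap d t) :=
  measurable_pi_lambda _ fun _ => measurable_pi_apply _

/-- `ℱ t` is generated by the map reading off the first `t` coordinates. -/
lemma F_eq_comap_prefixMap (t : ℕ) :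
    F d t = MeasurableSpace.comap (prefixMap d t) inferInstance := by
  refine le_antisymm (iSup₂_le fun i hi => ?_) ?_
  · have hcoord : (fun ω : Seq d => ω i) =
        (fun x : Fin t → RV d => x ⟨i, Finset.mem_range.mp hi⟩) ∘ prefixMap d t := rfl
    rw [hcoord, ← MeasurableSpace.comap_comp]
    exact MeasurableSpace.comap_mono (measurable_iff_comap_le.mp (measurable_pi_apply _))
  · refine measurable_iff_comap_le.mp ?_
    refine @measurable_pi_lambda _ _ _ (F d t) _ _ fun i => ?_
    refine measurable_iff_comap_le.mpr ?_
    exact le_iSup₂_of_le (i : ℕ) (Finset.mem_range.mpr i.2) le_rfl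

lemma measurable_Z (μ Γ : Measure (Seq d)) (t : ℕ) : Measurable[F d t] (Z d μ Γ t) := by
  rw [F_eq_comap_prefixMap]
  exact (Measure.measurable_rnDeriv _ _).ennreal_toReal.comp (comap_measurable (prefixMap d t))

/-- Change of measure at a fixed time via the density process. -/
lemma lintegral_eq_lintegral_mul_Z {μ Γ : Measure (Seq d)} [IsFiniteMeasure μ]
    [IsFiniteMeasure Γ] (hμ : LocAC d μ Γ) {t : ℕ} {f : Seq d → ℝ≥0∞}
    (hf : Measurable[F d t] f) :
    ∫⁻ ω, f ω ∂μ = ∫⁻ ω, ENNReal.ofReal (Z d μ Γ t ω) * f ω ∂Γ := by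
  rw [F_eq_comap_prefixMap] at hf
  obtain ⟨g, hg, rfl⟩ := hf.exists_eq_measurable_comp
  have hpre := measurable_prefixMap (d := d) t
  have : IsFiniteMeasure (prefixLaw d μ t) := by unfold prefixLaw; infer_instance
  have : IsFiniteMeasure (prefixLaw d Γ t) := by unfold prefixLaw; infer_instance
  have hfin : ∀ᵐ ω ∂Γ,
      (prefixLaw d μ t).rnDeriv (prefixLaw d Γ t) (prefixMap d t ω) < ∞ :=
    ae_of_ae_map hpre.aemeasurable (Measure.rnDeriv_lt_top _ _)
  calc ∫⁻ ω, g (prefixMap d t ω) ∂μ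
      = ∫⁻ x, g x ∂(prefixLaw d μ t) := (lintegral_map hg hpre).symm
    _ = ∫⁻ x, (prefixLaw d μ t).rnDeriv (prefixLaw d Γ t) x * g x ∂(prefixLaw d Γ t) :=
        (lintegral_rnDeriv_mul (hμ t) hg.aemeasurable).symm
    _ = ∫⁻ ω, (prefixLaw d μ t).rnDeriv (prefixLaw d Γ t) (prefixMap d t ω) *
          g (prefixMap d t ω) ∂Γ :=
        lintegral_map ((Measure.measurable_rnDeriv _ _).mul hg) hpre
    _ = _ := by
        refine lintegral_congr_ae ?_
        filter_upwards [hfin] with ω hω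
        simp only [Z, Function.comp_apply, ENNReal.ofReal_toReal hω.ne]

lemma Z_nonneg (μ Γ : Measure (Seq d)) (t : ℕ) (ω : Seq d) : 0 ≤ Z d μ Γ t ω :=
  ENNReal.toReal_nonneg

/-- Before the fork, a fork-convex combination agrees with its first component. -/
lemma IsFCC.lintegral_eq_of_le {Γ P Q R : Measure (Seq d)} [IsFiniteMeasure Γ] {s : ℕ}
    {h : Seq d → ℝ} (hR : IsFCC d Γ P Q s h R) {t : ℕ} (ht : t ≤ s) {f : Seq d → ℝ≥0∞}
    (hf : Measurable[F d t] f) : ∫⁻ ω, f ω ∂(R) = ∫⁻ ω, f ω ∂P := by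
  obtain ⟨_, _, hP, _, _, _, _, _, hRΓ, hZ⟩ := hR
  rw [lintegral_eq_lintegral_mul_Z hRΓ hf, lintegral_eq_lintegral_mul_Z hP hf]
  refine lintegral_congr_ae ?_
  filter_upwards [hZ t] with ω hω
  rw [hω, if_pos ht]

/-- After the fork, expectations under a fork-convex combination split into weighted expectations
under the two components, with `ℱ s`-measurable weights. -/
lemma IsFCC.lintegral_eq_of_lt {Γ P Q R : Measure (Seq d)} [IsFiniteMeasure Γ] {s : ℕ}
    {h : Seq d → ℝ} (hR : IsFCC d Γ P Q s h R) {t : ℕ} (ht : s < t) {f : Seq d → ℝ≥0∞}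
    (hf : Measurable[F d t] f) :
    ∫⁻ ω, f ω ∂(R) = ∫⁻ ω, ENNReal.ofReal (h ω) * f ω ∂P +
      ∫⁻ ω, ENNReal.ofReal ((1 - h ω) * (Z d P Γ s ω / Z d Q Γ s ω)) * f ω ∂Q := by
  obtain ⟨_, _, hP, hQ, hh, h01, _, _, hRΓ, hZ⟩ := hR
  have hst : F d s ≤ F d t := (F d).mono ht.le
  have hw₁ : Measurable[F d t] fun ω => ENNReal.ofReal (h ω) * f ω :=
    (hh.mono hst le_rfl).ennreal_ofReal.mul hf
  have hw₂ : Measurable[F d t] fun ω =>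
      ENNReal.ofReal ((1 - h ω) * (Z d P Γ s ω / Z d Q Γ s ω)) * f ω :=
    (((measurable_const.sub hh).mul
      ((measurable_Z P Γ s).div (measurable_Z Q Γ s))).mono hst le_rfl).ennreal_ofReal.mul hf
  rw [lintegral_eq_lintegral_mul_Z hRΓ hf, lintegral_eq_lintegral_mul_Z hP hw₁,
    lintegral_eq_lintegral_mul_Z hQ hw₂, ← lintegral_add_left]
  · refine lintegral_congr_ae ?_
    filter_upwards [hZ t] with ω hω
    have hratio : 0 ≤ Z d P Γ s ω / Z d Q Γ s ω :=
      div_nonneg (Z_nonneg P Γ s ω) (Z_nonneg Q Γ s ω)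
    have h1 : 0 ≤ 1 - h ω := sub_nonneg.mpr (h01 ω).2
    have hZP := Z_nonneg P Γ t ω
    have hZQ := Z_nonneg Q Γ t ω
    rw [hω, if_neg ht.not_ge, ENNReal.ofReal_add (mul_nonneg (h01 ω).1 hZP)
      (mul_nonneg (mul_nonneg h1 hZQ) hratio), ENNReal.ofReal_mul (h01 ω).1,
      ENNReal.ofReal_mul (mul_nonneg h1 hZQ), ENNReal.ofReal_mul h1, ENNReal.ofReal_mul h1]
    ring
  · exact (((measurable_Z P Γ t).ennreal_ofReal.mul hw₁).mono ((F d).le t) le_rfl)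

/-- An inequality of integrals over all sets of a sub-σ-algebra extends to all nonnegative
weights measurable with respect to it. -/
lemma lintegral_mul_le_of_setLIntegral_le {α : Type*} {m m₀ : MeasurableSpace α}
    {μ : Measure α} (hm : m ≤ m₀) {a b : α → ℝ≥0∞} (ha : Measurable a) (hb : Measurable b)
    (hab : ∀ A, MeasurableSet[m] A → ∫⁻ x in A, a x ∂μ ≤ ∫⁻ x in A, b x ∂μ)
    {g : α → ℝ≥0∞} (hg : Measurable[m] g) :
    ∫⁻ x, g x * a x ∂μ ≤ ∫⁻ x, g x * b x ∂μ := by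
  have hweight : ∀ c : α → ℝ≥0∞, Measurable c →
      ∫⁻ x, g x * c x ∂μ = ∫⁻ x, g x ∂((μ.withDensity c).trim hm) := by
    intro c hc
    rw [lintegral_trim hm hg,
      lintegral_withDensity_eq_lintegral_mul _ hc (hg.mono hm le_rfl)]
    simp only [Pi.mul_apply, mul_comm]
  have htrim : (μ.withDensity a).trim hm ≤ (μ.withDensity b).trim hm := by
    refine Measure.le_iff.mpr fun A hA => ?_
    rw [trim_measurableSet_eq hm hA, trim_measurableSet_eq hm hA,
      withDensity_apply _ (hm A hA), withDensity_apply _ (hm A hA)]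
    exact hab A hA
  rw [hweight a ha, hweight b hb]
  exact lintegral_mono' htrim le_rfl

/-- A one-step comparison, given `ℱ t`, between `ℱ (t + 1)`-measurable quantities passes from the
two components to a fork-convex combination. -/
lemma IsFCC.setLIntegral_le {Γ P Q R : Measure (Seq d)} [IsFiniteMeasure Γ] {s : ℕ}
    {h : Seq d → ℝ} (hR : IsFCC d Γ P Q s h R) {t : ℕ} {a b : Seq d → ℝ≥0∞}
    (ha : Measurable[F d (t + 1)] a) (hb : Measurable[F d (t + 1)] b)
    (hP : ∀ A, MeasurableSet[F d t] A → ∫⁻ ω in A, a ω ∂P ≤ ∫⁻ ω in A, b ω ∂P)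
    (hQ : ∀ A, MeasurableSet[F d t] A → ∫⁻ ω in A, a ω ∂Q ≤ ∫⁻ ω in A, b ω ∂Q)
    {A : Set (Seq d)} (hA : MeasurableSet[F d t] A) :
    ∫⁻ ω in A, a ω ∂(R) ≤ ∫⁻ ω in A, b ω ∂(R) := by
  have hAm : MeasurableSet A := (F d).le t A hA
  have hA' : MeasurableSet[F d (t + 1)] A := (F d).mono t.le_succ A hA
  have ha₀ : Measurable a := ha.mono ((F d).le _) le_rfl
  have hb₀ : Measurable b := hb.mono ((F d).le _) le_rfl
  rcases Nat.lt_or_ge s (t + 1) with hst | hst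
  · have hmono : F d s ≤ F d t := (F d).mono (Nat.lt_succ_iff.mp hst)
    have hind : ∀ (w c : Seq d → ℝ≥0∞) (ω : Seq d),
        w ω * A.indicator c ω = A.indicator w ω * c ω := by
      intro w c ω
      by_cases hω : ω ∈ A <;> simp [hω]
    have hh : Measurable[F d s] h := hR.2.2.2.2.1
    have hw₁ : Measurable[F d t] fun ω => ENNReal.ofReal (h ω) :=
      (hh.mono hmono le_rfl).ennreal_ofReal
    have hw₂ : Measurable[F d t] fun ω =>
        ENNReal.ofReal ((1 - h ω) * (Z d P Γ s ω / Z d Q Γ s ω)) :=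
      (((measurable_const.sub hh).mul
        ((measurable_Z P Γ s).div (measurable_Z Q Γ s))).mono hmono le_rfl).ennreal_ofReal
    rw [← lintegral_indicator hAm, ← lintegral_indicator hAm,
      hR.lintegral_eq_of_lt hst (ha.indicator hA'), hR.lintegral_eq_of_lt hst (hb.indicator hA')]
    have hP' := lintegral_mul_le_of_setLIntegral_le ((F d).le t) ha₀ hb₀ hP (hw₁.indicator hA)
    have hQ' := lintegral_mul_le_of_setLIntegral_le ((F d).le t) ha₀ hb₀ hQ (hw₂.indicator hA)
    simp only [← hind] at hP' hQ'
    exact add_le_add hP' hQ'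
  · rw [← lintegral_indicator hAm, ← lintegral_indicator hAm,
      hR.lintegral_eq_of_le hst (ha.indicator hA'), hR.lintegral_eq_of_le hst (hb.indicator hA'),
      lintegral_indicator hAm, lintegral_indicator hAm]
    exact hP A hA

lemma setLIntegral_ofReal_le_iff {α : Type*} [MeasurableSpace α] {μ : Measure α} {f g : α → ℝ}
    (hf : Integrable f μ) (hg : Integrable g μ) (hf₀ : ∀ x, 0 ≤ f x) (hg₀ : ∀ x, 0 ≤ g x)
    (A : Set α) :
    ∫⁻ x in A, ENNReal.ofReal (f x) ∂μ ≤ ∫⁻ x in A, ENNReal.ofReal (g x) ∂μ ↔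
      ∫ x in A, f x ∂μ ≤ ∫ x in A, g x ∂μ := by
  rw [← ofReal_integral_eq_lintegral_ofReal hf.integrableOn (ae_of_all _ hf₀),
    ← ofReal_integral_eq_lintegral_ofReal hg.integrableOn (ae_of_all _ hg₀),
    ENNReal.ofReal_le_ofReal_iff (integral_nonneg hg₀)]

lemma IsFCC.isNSM {Γ P Q R : Measure (Seq d)} [IsFiniteMeasure Γ] {s : ℕ}
    {h : Seq d → ℝ} (hR : IsFCC d Γ P Q s h R) {M : ℕ → Seq d → ℝ}
    (hMP : IsNSM d P M) (hMQ : IsNSM d Q M) : IsNSM d R M := by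
  obtain ⟨hM₀, hP⟩ := hMP
  obtain ⟨-, hQ⟩ := hMQ
  have := hR.1
  have := hR.2.1
  have : IsProbabilityMeasure R := hR.2.2.2.2.2.2.2.1
  have hadp : StronglyAdapted (F d) M := hP.1
  have hmeas : ∀ t, Measurable[F d t] fun ω => ENNReal.ofReal (M t ω) :=
    fun t => (hadp t).measurable.ennreal_ofReal
  have hstep : ∀ t A, MeasurableSet[F d t] A →
      ∫⁻ ω in A, ENNReal.ofReal (M (t + 1) ω) ∂(R) ≤ ∫⁻ ω in A, ENNReal.ofReal (M t ω) ∂(R) := by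
    intro t A hA
    refine hR.setLIntegral_le (hmeas (t + 1)) ((hmeas t).mono ((F d).mono t.le_succ) le_rfl)
      (fun B hB => ?_) (fun B hB => ?_) hA
    · exact (setLIntegral_ofReal_le_iff (hP.integrable _) (hP.integrable _) (hM₀ _) (hM₀ _) B).mpr
        (hP.setIntegral_le t.le_succ hB)
    · exact (setLIntegral_ofReal_le_iff (hQ.integrable _) (hQ.integrable _) (hM₀ _) (hM₀ _) B).mpr
        (hQ.setIntegral_le t.le_succ hB)
  have hfin : ∀ t, ∫⁻ ω, ENNReal.ofReal (M t ω) ∂(R) < ∞ := by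
    intro t
    induction t with
    | zero =>
      rw [hR.lintegral_eq_of_le s.zero_le (hmeas 0)]
      exact (hP.integrable 0).lintegral_lt_top
    | succ t ih =>
      refine lt_of_le_of_lt ?_ ih
      simpa only [Measure.restrict_univ] using hstep t Set.univ MeasurableSet.univ
  have hint : ∀ t, Integrable (M t) R := fun t =>
    (lintegral_ofReal_ne_top_iff_integrable
      ((hadp t).mono ((F d).le t)).aestronglyMeasurable (ae_of_all _ (hM₀ t))).mp (hfin t).ne
  refine ⟨hM₀, supermartingale_of_setIntegral_succ_le hadp hint fun t A hA => ?_⟩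
  exact (setLIntegral_ofReal_le_iff (hint _) (hint _) (hM₀ _) (hM₀ _) A).mp (hstep t A hA)

lemma IsFCC.isNM {Γ P Q R : Measure (Seq d)} [IsFiniteMeasure Γ] {s : ℕ}
    {h : Seq d → ℝ} (hR : IsFCC d Γ P Q s h R) {M : ℕ → Seq d → ℝ}
    (hMP : IsNM d P M) (hMQ : IsNM d Q M) : IsNM d R M := by
  obtain ⟨hM₀, hP⟩ := hMP
  obtain ⟨-, hQ⟩ := hMQ
  have := hR.1
  have := hR.2.1
  have : IsProbabilityMeasure R := hR.2.2.2.2.2.2.2.1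
  have hadp : StronglyAdapted (F d) M := hP.1
  have hRM : Supermartingale M (F d) R :=
    (hR.isNSM ⟨hM₀, hP.supermartingale⟩ ⟨hM₀, hQ.supermartingale⟩).2
  have hmeas : ∀ t, Measurable[F d t] fun ω => ENNReal.ofReal (M t ω) :=
    fun t => (hadp t).measurable.ennreal_ofReal
  refine ⟨hM₀, martingale_of_setIntegral_eq_succ hadp hRM.integrable fun t A hA => ?_⟩
  refine le_antisymm ?_ (hRM.setIntegral_le t.le_succ hA)
  rw [← setLIntegral_ofReal_le_iff (hRM.integrable _) (hRM.integrable _) (hM₀ _) (hM₀ _)]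
  refine hR.setLIntegral_le ((hmeas t).mono ((F d).mono t.le_succ) le_rfl) (hmeas (t + 1))
    (fun B hB => ?_) (fun B hB => ?_) hA
  · exact (setLIntegral_ofReal_le_iff (hP.integrable _) (hP.integrable _) (hM₀ _) (hM₀ _) B).mpr
      (hP.setIntegral_eq t.le_succ hB).le
  · exact (setLIntegral_ofReal_le_iff (hQ.integrable _) (hQ.integrable _) (hM₀ _) (hM₀ _) B).mpr
      (hQ.setIntegral_eq t.le_succ hB).le

variable (d)

/-- Fork-convex combinations preserve the nonnegative supermartingale and
nonnegative martingale properties. -/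
theorem statement1 (Γ P Q R : Measure (Seq d)) (hΓ : IsGamma d Γ)
    (s : ℕ) (h : Seq d → ℝ) (hFCC : IsFCC d Γ P Q s h R) (M : ℕ → Seq d → ℝ) :
    (IsNSM d P M → IsNSM d Q M → IsNSM d R M) ∧
    (IsNM d P M → IsNM d Q M → IsNM d R M) := by
  have := hΓ.1
  exact ⟨hFCC.isNSM, hFCC.isNM⟩

end SeqTest
end
end

section
/- Finite mixtures of nondegenerate Gaussian densities are dense in L¹ among all probability densities on ℝ^d: for every probability density f on ℝ^d (with respect to Lebesgue measure) and every ε > 0, there exist k ∈ ℕ, weights α_1,…,α_k ≥ 0 with Σα_i = 1, means μ_i ∈ ℝ^d, and positive-definite covariance matrices Σ_i such that ∫_{ℝ^d} | f(x) − Σ_{i=1}^k α_i φ_{μ_i,Σ_i}(x) | dx ≤ ε, where φ_{μ,Σ} denotes the Gaussian density with mean μ and covariance Σ. -/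
open MeasureTheory Matrix

noncomputable section

/-- The density of the `d`-dimensional Gaussian with mean `m` and positive-definite
covariance matrix `S`. -/
def gaussDensityFn (d : ℕ) (m : Fin d → ℝ) (S : Matrix (Fin d) (Fin d) ℝ)
    (x : Fin d → ℝ) : ℝ :=
  (2 * Real.pi) ^ (-(d : ℝ) / 2) * S.det ^ (-(1 : ℝ) / 2) *
    Real.exp (-(1 / 2) * ((x - m) ⬝ᵥ (S⁻¹ *ᵥ (x - m))))

open Filter Topology
open scoped ENNReal NNReal

section Translation

variable {E Y : Type*} [NormedAddCommGroup E] [NormedSpace ℝ E] [FiniteDimensional ℝ E]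
  [MeasurableSpace E] [BorelSpace E] {μ : Measure E} [μ.IsAddHaarMeasure]
  [MeasurableSpace Y] {ν : Measure Y} [IsFiniteMeasure ν]

/-- Translation is continuous in `L¹`. -/
theorem tendsto_lintegral_enorm_translate_sub {ι : Type*} {l : Filter ι} {h : E → ℝ}
    (hh : Integrable h μ) {v : ι → E} {u : E} (hv : Tendsto v l (𝓝 u)) :
    Tendsto (fun n => ∫⁻ x, ‖h (x - u) - h (x - v n)‖ₑ ∂μ) l (𝓝 0) := by
  have hmem : MemLp h 1 μ := memLp_one_iff_integrable.2 hh
  have : Fact ((1 : ℝ≥0∞) ≠ ∞) := ⟨ENNReal.one_ne_top⟩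
  have hcont : Continuous fun c : E => DomAddAct.mk (-c) +ᵥ hmem.toLp h := by
    have : Continuous fun c : E => DomAddAct.mk (-c) := DomAddAct.continuous_mk.comp continuous_neg
    exact this.vadd continuous_const
  have hedist := (tendsto_const_nhds (x := DomAddAct.mk (-u) +ᵥ hmem.toLp h)).edist
    ((hcont.tendsto u).comp hv)
  rw [edist_self] at hedist
  refine hedist.congr fun n => ?_
  simp only [Function.comp_apply, DomAddAct.mk_vadd_toLp, Lp.edist_toLp_toLp,
    eLpNorm_one_eq_lintegral_enorm]
  simp [sub_eq_neg_add]

theorem integrable_prod_translate {h : E → ℝ} (hm : Measurable h) (hh : Integrable h μ)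
    {u : Y → E} (hu : Measurable u) :
    Integrable (fun p : E × Y => h (p.1 - u p.2)) (μ.prod ν) := by
  rw [integrable_prod_iff' (Measurable.aestronglyMeasurable (by fun_prop))]
  refine ⟨.of_forall fun y => hh.comp_sub_right (u y), ?_⟩
  simp only [integral_sub_right_eq_self (fun x => ‖h x‖)]
  exact integrable_const _

/-- Averages of translates of an integrable function depend continuously, in `L¹`, on the
family of translations. -/
theorem tendsto_lintegral_enorm_integral_translate_sub {h : E → ℝ} (hm : Measurable h)
    (hh : Integrable h μ) {u : Y → E} (hu : Measurable u) {v : ℕ → Y → E}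
    (hv : ∀ n, Measurable (v n)) (huv : ∀ y, Tendsto (fun n => v n y) atTop (𝓝 (u y))) :
    Tendsto (fun n => ∫⁻ x, ‖(∫ y, h (x - u y) ∂ν) - ∫ y, h (x - v n y) ∂ν‖ₑ ∂μ)
      atTop (𝓝 0) := by
  have hlim : Tendsto (fun n => ∫⁻ y, ∫⁻ x, ‖h (x - u y) - h (x - v n y)‖ₑ ∂μ ∂ν)
      atTop (𝓝 (∫⁻ _, 0 ∂ν)) := by
    refine tendsto_lintegral_of_dominated_convergence
      (fun _ => (∫⁻ x, ‖h x‖ₑ ∂μ) + ∫⁻ x, ‖h x‖ₑ ∂μ) (fun n => ?_) (fun n => ?_) ?_ ?_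
    · have := hv n
      exact Measurable.lintegral_prod_right' (ν := μ)
        (f := fun p : Y × E => ‖h (p.2 - u p.1) - h (p.2 - v n p.1)‖ₑ) (by fun_prop)
    · refine .of_forall fun y => ?_
      calc ∫⁻ x, ‖h (x - u y) - h (x - v n y)‖ₑ ∂μ
          ≤ ∫⁻ x, (‖h (x - u y)‖ₑ + ‖h (x - v n y)‖ₑ) ∂μ := lintegral_mono fun x => enorm_sub_le
        _ = _ := by
          rw [lintegral_add_left (by fun_prop),
            lintegral_sub_right_eq_self (fun x => ‖h x‖ₑ),
            lintegral_sub_right_eq_self (fun x => ‖h x‖ₑ)]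
    · have : ∫⁻ x, ‖h x‖ₑ ∂μ ≠ ∞ := hh.2.ne
      rw [lintegral_const]
      exact ENNReal.mul_ne_top (ENNReal.add_ne_top.2 ⟨this, this⟩) (measure_ne_top _ _)
    · exact .of_forall fun y => tendsto_lintegral_enorm_translate_sub hh (huv y)
  rw [lintegral_zero] at hlim
  refine tendsto_of_tendsto_of_tendsto_of_le_of_le tendsto_const_nhds hlim
    (fun _ => zero_le) fun n => ?_
  have hvn := hv n
  calc ∫⁻ x, ‖(∫ y, h (x - u y) ∂ν) - ∫ y, h (x - v n y) ∂ν‖ₑ ∂μ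
      = ∫⁻ x, ‖∫ y, (h (x - u y) - h (x - v n y)) ∂ν‖ₑ ∂μ := by
        refine lintegral_congr_ae ?_
        filter_upwards [(integrable_prod_translate (ν := ν) hm hh hu).prod_right_ae,
          (integrable_prod_translate (ν := ν) hm hh hvn).prod_right_ae] with x h₁ h₂
        rw [integral_sub h₁ h₂]
    _ ≤ ∫⁻ x, ∫⁻ y, ‖h (x - u y) - h (x - v n y)‖ₑ ∂ν ∂μ :=
        lintegral_mono fun x => enorm_integral_le_lintegral_enorm _
    _ = _ := lintegral_lintegral_swap (by fun_prop)

end Translation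

theorem MeasureTheory.SimpleFunc.integral_comp_eq_sum {Y Z : Type*} [MeasurableSpace Y]
    {ν : Measure Y} [IsFiniteMeasure ν] (T : SimpleFunc Y Z) (g : Z → ℝ) :
    ∫ y, g (T y) ∂ν = ∑ m ∈ T.range, ν.real (T ⁻¹' {m}) * g m := by
  classical
  have hpt (y : Y) : g (T y) = ∑ m ∈ T.range, (T ⁻¹' {m}).indicator (fun _ => g m) y := by
    simp [Set.indicator_apply]
  simp_rw [hpt]
  rw [integral_finsetSum _ fun m _ => (integrable_const _).indicator (T.measurableSet_fiber m)]
  simp [integral_indicator_const, T.measurableSet_fiber]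

theorem isProbabilityMeasure_withDensity_ofReal {Y : Type*} [MeasurableSpace Y] {μ : Measure Y}
    {f : Y → ℝ} (hf : ∀ x, 0 ≤ f x) (hint : ∫ x, f x ∂μ = 1) :
    IsProbabilityMeasure (μ.withDensity fun x => ENNReal.ofReal (f x)) := by
  have hi : Integrable f μ := .of_integral_ne_zero (by simp [hint])
  constructor
  rw [withDensity_apply _ .univ, Measure.restrict_univ,
    ← ofReal_integral_eq_lintegral_ofReal hi (.of_forall hf), hint, ENNReal.ofReal_one]

theorem integral_withDensity_ofReal {Y : Type*} [MeasurableSpace Y] {μ : Measure Y}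
    {f : Y → ℝ} (hm : Measurable f) (hf : ∀ x, 0 ≤ f x) (g : Y → ℝ) :
    ∫ y, g y ∂(μ.withDensity fun x => ENNReal.ofReal (f x)) = ∫ y, f y * g y ∂μ := by
  rw [integral_withDensity_eq_integral_toReal_smul (by fun_prop) (by simp)]
  simp [ENNReal.toReal_ofReal (hf _)]

/-- The isotropic Gaussian density as a rescaled translate of the standard one. -/
theorem gaussDensityFn_isotropic (d : ℕ) (m x : Fin d → ℝ) {c : ℝ} (hc : 0 < c) :
    gaussDensityFn d m ((c ^ 2)⁻¹ • 1) x = c ^ d * gaussDensityFn d 0 1 (c • (x - m)) := by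
  have hinv : ((c ^ 2)⁻¹ • (1 : Matrix (Fin d) (Fin d) ℝ))⁻¹ = c ^ 2 • 1 := by
    apply Matrix.inv_eq_right_inv
    rw [smul_mul_smul_comm, mul_one, inv_mul_cancel₀ (by positivity), one_smul]
  have hdet : (((c ^ 2)⁻¹ • (1 : Matrix (Fin d) (Fin d) ℝ)).det) ^ (-(1 : ℝ) / 2) = c ^ d := by
    rw [Matrix.det_smul, Matrix.det_one, mul_one, Fintype.card_fin, ← inv_pow, ← pow_mul,
      mul_comm 2 d, pow_mul, neg_div, Real.rpow_neg (by positivity),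
      ← Real.sqrt_eq_rpow, Real.sqrt_sq (by positivity), inv_pow, inv_inv]
  rw [gaussDensityFn, gaussDensityFn, hinv, hdet]
  simp only [Matrix.smul_mulVec, Matrix.one_mulVec, inv_one, Matrix.det_one, Real.one_rpow,
    dotProduct_smul, smul_dotProduct, sub_zero, smul_eq_mul]
  ring_nf

theorem gaussDensityFn_standard (d : ℕ) (x : Fin d → ℝ) :
    gaussDensityFn d 0 1 x = ∏ i, ProbabilityTheory.gaussianPDFReal 0 1 (x i) := by
  have hpi : 0 ≤ 2 * Real.pi := by positivity
  simp only [gaussDensityFn, ProbabilityTheory.gaussianPDFReal, Finset.prod_mul_distrib,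
    Finset.prod_const, ← Real.exp_sum, Finset.card_univ, Fintype.card_fin]
  congr 1
  · rw [Real.sqrt_eq_rpow, ← Real.rpow_neg (by simpa using hpi),
      ← Real.rpow_mul_natCast (by simpa using hpi)]
    simp
    ring_nf
  · congr 1
    simp only [dotProduct, Finset.mul_sum, inv_one, Matrix.one_mulVec, sub_zero]
    refine Finset.sum_congr rfl fun i _ => ?_
    push_cast
    ring

theorem continuous_gaussDensityFn (d : ℕ) (m : Fin d → ℝ) (S : Matrix (Fin d) (Fin d) ℝ) :
    Continuous (gaussDensityFn d m S) := by
  unfold gaussDensityFn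
  fun_prop

theorem integral_gaussDensityFn_standard (d : ℕ) :
    ∫ x, gaussDensityFn d 0 1 x = 1 := by
  simp_rw [gaussDensityFn_standard]
  rw [integral_fintype_prod_volume_eq_prod (fun _ : Fin d => ProbabilityTheory.gaussianPDFReal 0 1)]
  simp [ProbabilityTheory.integral_gaussianPDFReal_eq_one]

theorem gaussDensityFn_standard_nonneg (d : ℕ) (x : Fin d → ℝ) :
    0 ≤ gaussDensityFn d 0 1 x := by
  rw [gaussDensityFn_standard]
  exact Finset.prod_nonneg fun i _ => ProbabilityTheory.gaussianPDFReal_nonneg _ _ _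

/-- Smoothing `f` with an isotropic Gaussian, written as an average of translates of `f`. -/
theorem integral_mul_gaussDensityFn_isotropic (d : ℕ) (f : (Fin d → ℝ) → ℝ) (x : Fin d → ℝ)
    {c : ℝ} (hc : 0 < c) :
    ∫ y, f y * gaussDensityFn d 0 ((c ^ 2)⁻¹ • 1) (x - y) =
      ∫ z, gaussDensityFn d 0 1 z * f (x - c⁻¹ • z) := by
  rw [← integral_sub_left_eq_self _ volume x]
  have hscale := Measure.integral_comp_smul (volume : Measure (Fin d → ℝ))
    (fun z => gaussDensityFn d 0 1 z * f (x - c⁻¹ • z)) c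
  simp only [inv_smul_smul₀ hc.ne', Module.finrank_fin_fun, smul_eq_mul] at hscale
  rw [abs_of_pos (by positivity), eq_inv_mul_iff_mul_eq₀ (by positivity)] at hscale
  rw [← hscale, ← integral_const_mul]
  refine integral_congr_ae (.of_forall fun z => ?_)
  simp only [sub_sub_cancel, gaussDensityFn_isotropic d _ _ hc, sub_zero]
  ring

/-- Finite mixtures of nondegenerate Gaussian densities are dense in `L¹`
among all probability densities on `ℝ^d`. -/
theorem statement8 (d : ℕ) (f : (Fin d → ℝ) → ℝ) (hf_meas : Measurable f)
    (hf_nonneg : ∀ x, 0 ≤ f x) (hf_int : ∫ x, f x = 1) (ε : ℝ) (hε : 0 < ε) :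
    ∃ (k : ℕ) (α : Fin k → ℝ) (ms : Fin k → Fin d → ℝ)
      (Ss : Fin k → Matrix (Fin d) (Fin d) ℝ),
      (∀ i, 0 ≤ α i) ∧ (∑ i, α i = 1) ∧ (∀ i, (Ss i).PosDef) ∧
      ∫ x, |f x - ∑ i, α i * gaussDensityFn d (ms i) (Ss i) x| ≤ ε := by
  have hf : Integrable f := .of_integral_ne_zero (by simp [hf_int])
  have hδ : 0 < ENNReal.ofReal (ε / 2) := by simpa using hε
  set γ := gaussDensityFn d 0 1
  have hγm : Measurable γ := (continuous_gaussDensityFn d 0 1).measurable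
  have hγi : Integrable γ :=
    .of_integral_ne_zero (by simp [γ, integral_gaussDensityFn_standard])
  set Γ : Measure (Fin d → ℝ) := volume.withDensity fun x => ENNReal.ofReal (γ x)
  have hΓ : IsProbabilityMeasure Γ := isProbabilityMeasure_withDensity_ofReal
    (gaussDensityFn_standard_nonneg d) (integral_gaussDensityFn_standard d)
  set ν : Measure (Fin d → ℝ) := volume.withDensity fun x => ENNReal.ofReal (f x)
  have hν : IsProbabilityMeasure ν := isProbabilityMeasure_withDensity_ofReal hf_nonneg hf_int
  -- smoothing `f` with a narrow Gaussian changes it little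
  obtain ⟨c, hc, hsmooth⟩ : ∃ c : ℝ, 0 < c ∧
      ∫⁻ x, ‖f x - ∫ y, gaussDensityFn d 0 ((c ^ 2)⁻¹ • 1) (x - y) ∂ν‖ₑ
        < ENNReal.ofReal (ε / 2) := by
    have hlim (z : Fin d → ℝ) :
        Tendsto (fun n : ℕ => ((n : ℝ) + 1)⁻¹ • z) atTop (𝓝 0) := by
      simpa using (tendsto_one_div_add_atTop_nhds_zero_nat (𝕜 := ℝ)).smul_const z
    obtain ⟨n, hn⟩ := ((tendsto_lintegral_enorm_integral_translate_sub (μ := volume) (ν := Γ)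
      hf_meas hf measurable_const (fun n => measurable_const_smul _) hlim).eventually_lt_const
        hδ).exists
    refine ⟨n + 1, by positivity, ?_⟩
    convert hn using 5 with x
    · simp
    · rw [integral_withDensity_ofReal hf_meas hf_nonneg,
        integral_withDensity_ofReal hγm (gaussDensityFn_standard_nonneg d),
        integral_mul_gaussDensityFn_isotropic d f x (by positivity)]
  set S : Matrix (Fin d) (Fin d) ℝ := (c ^ 2)⁻¹ • 1 with hS
  set g := gaussDensityFn d 0 S with hg
  have hgm : Measurable g := (continuous_gaussDensityFn d 0 S).measurable
  have hgi : Integrable g := by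
    have : g = fun x => c ^ d * γ (c • x) := by
      ext x
      rw [hg, hS, gaussDensityFn_isotropic d 0 x hc, sub_zero]
    rw [this]
    exact (hγi.comp_smul hc.ne').const_mul _
  -- replacing the mixing measure by a discretisation changes the smoothing little
  obtain ⟨T, hT⟩ : ∃ T : SimpleFunc (Fin d → ℝ) (Fin d → ℝ),
      ∫⁻ x, ‖(∫ y, g (x - y) ∂ν) - ∫ y, g (x - T y) ∂ν‖ₑ < ENNReal.ofReal (ε / 2) := by
    let T := SimpleFunc.approxOn (id : (Fin d → ℝ) → Fin d → ℝ) measurable_id Set.univ 0 trivial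
    obtain ⟨n, hn⟩ := ((tendsto_lintegral_enorm_integral_translate_sub (μ := volume) (ν := ν)
      hgm hgi measurable_id (fun n => (T n).measurable) fun y =>
        SimpleFunc.tendsto_approxOn measurable_id (Set.mem_univ 0) (by simp)).eventually_lt_const
          hδ).exists
    exact ⟨T n, hn⟩
  let e := T.range.equivFin
  have hsum (w : (Fin d → ℝ) → ℝ) :
      ∑ i, ν.real (T ⁻¹' {(e.symm i : Fin d → ℝ)}) * w (e.symm i) = ∫ y, w (T y) ∂ν := by
    rw [T.integral_comp_eq_sum, ← Finset.sum_coe_sort T.range,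
      e.symm.sum_comp (fun m : T.range => ν.real (T ⁻¹' {(m : Fin d → ℝ)}) * w m)]
  refine ⟨T.range.card, fun i => ν.real (T ⁻¹' {(e.symm i : Fin d → ℝ)}),
    fun i => e.symm i, fun _ => S, fun i => measureReal_nonneg, ?_, fun _ => ?_, ?_⟩
  · simpa using hsum fun _ => 1
  · exact Matrix.PosDef.one.smul (by positivity)
  have htrans (m x : Fin d → ℝ) : gaussDensityFn d m S x = g (x - m) := by
    simp [hg, gaussDensityFn]
  have hmix (x : Fin d → ℝ) := hsum fun m => g (x - m)
  simp_rw [htrans, hmix]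
  have hmean (u : (Fin d → ℝ) → Fin d → ℝ) (hu : Measurable u) :
      Measurable fun x => ∫ y, g (x - u y) ∂ν :=
    (StronglyMeasurable.integral_prod_right (ν := ν)
      (f := fun x y => g (x - u y)) (by fun_prop)).measurable
  have hid : Measurable fun x => ∫ y, g (x - y) ∂ν := hmean _ measurable_id
  have hTm := hmean _ T.measurable
  simp_rw [← Real.norm_eq_abs]
  rw [integral_norm_eq_lintegral_enorm (by fun_prop)]
  refine ENNReal.toReal_le_of_le_ofReal hε.le ?_
  calc ∫⁻ x, ‖f x - ∫ y, g (x - T y) ∂ν‖ₑ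
      ≤ ∫⁻ x, (‖f x - ∫ y, g (x - y) ∂ν‖ₑ +
          ‖(∫ y, g (x - y) ∂ν) - ∫ y, g (x - T y) ∂ν‖ₑ) :=
        lintegral_mono fun x => by
          simpa using enorm_add_le (f x - ∫ y, g (x - y) ∂ν)
            ((∫ y, g (x - y) ∂ν) - ∫ y, g (x - T y) ∂ν)
    _ ≤ ENNReal.ofReal (ε / 2) + ENNReal.ofReal (ε / 2) := by
        rw [lintegral_add_left (by fun_prop)]
        exact add_le_add hsmooth.le hT.le
    _ = ENNReal.ofReal ε := by
        rw [← ENNReal.ofReal_add (by positivity) (by positivity), add_halves]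
end
end
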